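/- (Generalization bound for LR-εNVC-R) Let λ > 0, let μ be a Borel probability measure on ℝ^p × ℝ supported in X × [0, D̄], let δ ∈ (0, 1), and let A : (ℝ^p × ℝ)^n → ℝ^p be a measurable map such that for μ^{⊗n}-almost every dataset S, A(S) is the minimizer over ℝ^p of R̂(θ; S) + λ·‖θ‖₂². Define the true risk R(θ) = ∫ L(s, ⟨x, θ⟩) dμ(x, s). Then, with probability at least 1 − δ over S drawn from μ^{⊗n}, R(A(S)) − R̂(A(S); S) ≤ (α ∨ (1 − α))²·X_max²·p/(n·λ) + 2·(α ∨ (1 − α))²·X_max²·(p/λ)·√(ln(2/δ)/(2n)) + (D̄ + ε₂)·(α ∨ (1 − α))·√(ln(2/δ)/(2n)). -/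

import Mathlib

open RealInnerProductSpace MeasureTheory

/-- The ε-insensitive newsvendor loss. -/
noncomputable def epsLoss (α ε₁ ε₂ s y : ℝ) : ℝ :=
  (1 - α) * max (y - s - ε₁) 0 + α * max (s + ε₂ - y) 0

/-- The empirical risk of `θ` on a dataset `S` of `n` feature/observation pairs. -/
noncomputable def empRisk (α ε₁ ε₂ : ℝ) {p n : ℕ}
    (S : Fin n → EuclideanSpace ℝ (Fin p) × ℝ) (θ : EuclideanSpace ℝ (Fin p)) : ℝ :=
  (1 / (n : ℝ)) * ∑ i, epsLoss α ε₁ ε₂ (S i).2 ⟪(S i).1, θ⟫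

/-- The true risk of `θ` under the data-generating distribution `μ`. -/
noncomputable def trueRisk (α ε₁ ε₂ : ℝ) {p : ℕ}
    (μ : Measure (EuclideanSpace ℝ (Fin p) × ℝ)) (θ : EuclideanSpace ℝ (Fin p)) : ℝ :=
  ∫ z, epsLoss α ε₁ ε₂ z.2 ⟪z.1, θ⟫ ∂μ

/-!
A minimizer of `R̂ + λ‖·‖²` lies in the ball of radius `Mκ/(2λ)`, where `M = α ∨ (1 - α)` is a
Lipschitz constant of the loss and `κ` bounds the features, so it suffices to bound `R - R̂`
uniformly over that ball. By McDiarmid's inequality the supremum, taken over a countable dense set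
of parameters, concentrates around its mean. The mean is controlled by revealing the sample one
point at a time: symmetrization and contraction replace the loss at each point by `±2M⟪x, θ⟫`, and
the parallelogram law shows that the resulting bound grows only like `√n`. The confidence term is
then `√(ln(1/δ)/(2n))`, and the gap between `ln(2/δ)` and `ln(1/δ)` absorbs the remaining `1/√n`.
-/

section McDiarmid

open ProbabilityTheory NNReal

theorem hasSubgaussianMGF_add_prod {Ω Ω' : Type*} [MeasurableSpace Ω] [MeasurableSpace Ω']
    {μ : Measure Ω} {ν : Measure Ω'} [SFinite μ] [SFinite ν] {U : Ω → ℝ} {V : Ω × Ω' → ℝ}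
    {c d : ℝ≥0}
    (hU : HasSubgaussianMGF U c μ) (hV : ∀ x, HasSubgaussianMGF (fun y => V (x, y)) d ν)
    (hVm : AEMeasurable V (μ.prod ν)) :
    HasSubgaussianMGF (fun q => U q.1 + V q) (c + d) (μ.prod ν) := by
  have hsplit (t x y) :
      Real.exp (t * (U x + V (x, y))) = Real.exp (t * U x) * Real.exp (t * V (x, y)) := by
    rw [mul_add, Real.exp_add]
  have hfibre (t x) : ∫ y, Real.exp (t * (U x + V (x, y))) ∂ν ≤
      Real.exp (t * U x) * Real.exp (d * t ^ 2 / 2) := by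
    simp only [hsplit, integral_const_mul]
    exact mul_le_mul_of_nonneg_left ((hV x).mgf_le t) (Real.exp_nonneg _)
  have hdom (t) :
      Integrable (fun x => Real.exp (t * U x) * Real.exp (d * t ^ 2 / 2)) μ :=
    (hU.integrable_exp_mul t).mul_const _
  have hint (t) : Integrable (fun q => Real.exp (t * (U q.1 + V q))) (μ.prod ν) := by
    have hm : AEStronglyMeasurable (fun q => Real.exp (t * (U q.1 + V q))) (μ.prod ν) :=
      (Real.measurable_exp.comp_aemeasurable
        ((hU.aemeasurable.comp_fst.add hVm).const_mul t)).aestronglyMeasurable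
    refine (integrable_prod_iff hm).2 ⟨.of_forall fun x => ?_, ?_⟩
    · simp only [hsplit]
      exact ((hV x).integrable_exp_mul t).const_mul _
    · refine (hdom t).mono hm.norm.integral_prod_right' (.of_forall fun x => ?_)
      simp only [Real.norm_eq_abs, Real.abs_exp]
      rw [abs_of_nonneg (integral_nonneg fun y => (Real.exp_nonneg _)),
        abs_of_nonneg (by positivity)]
      exact hfibre t x
  refine ⟨hint, fun t => ?_⟩
  calc mgf (fun q => U q.1 + V q) (μ.prod ν) t
      = ∫ x, ∫ y, Real.exp (t * (U x + V (x, y))) ∂ν ∂μ := integral_prod _ (hint t)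
    _ ≤ ∫ x, Real.exp (t * U x) * Real.exp (d * t ^ 2 / 2) ∂μ :=
        integral_mono (hint t).integral_prod_left (hdom t) (hfibre t)
    _ ≤ Real.exp (c * t ^ 2 / 2) * Real.exp (d * t ^ 2 / 2) := by
        rw [integral_mul_const]
        exact mul_le_mul_of_nonneg_right (hU.mgf_le t) (Real.exp_nonneg _)
    _ = Real.exp ((c + d : ℝ≥0) * t ^ 2 / 2) := by
        rw [← Real.exp_add, NNReal.coe_add]
        ring_nf

theorem hasSubgaussianMGF_sub_integral_of_le_add {Ω : Type*} [MeasurableSpace Ω] {μ : Measure Ω}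
    [IsProbabilityMeasure μ] {m : Ω → ℝ} (hm : Measurable m) {c : ℝ≥0}
    (hmc : ∀ z w, m w ≤ m z + c) :
    HasSubgaussianMGF (fun z => m z - ∫ w, m w ∂μ) ((c / 2) ^ 2) μ := by
  obtain ⟨z₀⟩ : Nonempty Ω := μ.nonempty_of_neZero
  have : Nonempty Ω := ⟨z₀⟩
  have hbdd : BddBelow (Set.range m) :=
    ⟨m z₀ - c, Set.forall_mem_range.2 fun z => sub_le_iff_le_add.2 (hmc z z₀)⟩
  have hmem (z) : m z ∈ Set.Icc (⨅ w, m w) ((⨅ w, m w) + c) :=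
    ⟨ciInf_le hbdd z, sub_le_iff_le_add.1 (le_ciInf fun w => sub_le_iff_le_add.2 (hmc w z))⟩
  simpa using hasSubgaussianMGF_of_mem_Icc (μ := μ) hm.aemeasurable (.of_forall hmem)

theorem le_add_sum_of_update_le_add {ι : Type*} [Fintype ι] [DecidableEq ι] {Z : ι → Type*}
    {G : (∀ i, Z i) → ℝ} {c : ι → ℝ} (hG : ∀ S i z, G (Function.update S i z) ≤ G S + c i)
    (S S' : ∀ i, Z i) : G S' ≤ G S + ∑ i, c i := by
  suffices h : ∀ s : Finset ι, G (s.piecewise S' S) ≤ G S + ∑ i ∈ s, c i by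
    simpa using h Finset.univ
  intro s
  induction s using Finset.induction_on with
  | empty => simp
  | insert i s hi ih =>
    rw [Finset.piecewise_insert, Finset.sum_insert hi]
    linarith [hG (s.piecewise S' S) i (S' i)]

theorem measurePreserving_finCons {n : ℕ} {Z : Fin (n + 1) → Type*} [∀ i, MeasurableSpace (Z i)]
    (μ : ∀ i, Measure (Z i)) [∀ i, SigmaFinite (μ i)] :
    MeasurePreserving (fun q : Z 0 × (∀ i : Fin n, Z i.succ) => (Fin.cons q.1 q.2 : ∀ i, Z i))
      ((μ 0).prod (Measure.pi fun i => μ i.succ)) (Measure.pi μ) := by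
  have h : (fun q : Z 0 × (∀ i : Fin n, Z i.succ) => (Fin.cons q.1 q.2 : ∀ i, Z i)) =
      (MeasurableEquiv.piFinSuccAbove Z 0).symm := by
    funext q
    exact (Fin.insertNth_zero q.1 q.2).symm
  rw [h]
  exact (measurePreserving_piFinSuccAbove μ 0).symm

theorem identDistrib_comp_finCons {n : ℕ} {Z : Fin (n + 1) → Type*} [∀ i, MeasurableSpace (Z i)]
    (μ : ∀ i, Measure (Z i)) [∀ i, SigmaFinite (μ i)] {β : Type*} [MeasurableSpace β]
    {G : (∀ i, Z i) → β} (hG : Measurable G) :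
    IdentDistrib (fun q : Z 0 × (∀ i : Fin n, Z i.succ) => G (Fin.cons q.1 q.2)) G
      ((μ 0).prod (Measure.pi fun i => μ i.succ)) (Measure.pi μ) where
  aemeasurable_fst := (hG.comp (measurePreserving_finCons μ).measurable).aemeasurable
  aemeasurable_snd := hG.aemeasurable
  map_eq := by
    rw [← (measurePreserving_finCons μ).map_eq,
      Measure.map_map hG (measurePreserving_finCons μ).measurable]
    rfl

theorem integrable_pi_of_update_le_add {ι : Type*} [Fintype ι] [DecidableEq ι] {Z : ι → Type*}
    [∀ i, MeasurableSpace (Z i)] (μ : ∀ i, Measure (Z i)) [∀ i, IsProbabilityMeasure (μ i)]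
    {G : (∀ i, Z i) → ℝ} (hG : Measurable G) {c : ι → ℝ}
    (hGc : ∀ S i z, G (Function.update S i z) ≤ G S + c i) : Integrable G (Measure.pi μ) := by
  obtain ⟨S₀⟩ : Nonempty (∀ i, Z i) := (Measure.pi μ).nonempty_of_neZero
  exact .of_mem_Icc (G S₀ - ∑ i, c i) (G S₀ + ∑ i, c i) hG.aemeasurable (.of_forall fun S =>
    ⟨sub_le_iff_le_add.2 (le_add_sum_of_update_le_add hGc S S₀),
      le_add_sum_of_update_le_add hGc S₀ S⟩)

/-- McDiarmid's inequality: given the first coordinate, `G` deviates from its conditional mean by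
bounded differences in the others, and the conditional mean has bounded oscillation. -/
theorem hasSubgaussianMGF_sub_integral_of_update_le_add {n : ℕ} {Z : Fin n → Type*}
    [∀ i, MeasurableSpace (Z i)] (μ : ∀ i, Measure (Z i)) [∀ i, IsProbabilityMeasure (μ i)]
    {G : (∀ i, Z i) → ℝ} (hG : Measurable G) {c : Fin n → ℝ≥0}
    (hGc : ∀ S i z, G (Function.update S i z) ≤ G S + c i) :
    HasSubgaussianMGF (fun S => G S - ∫ S', G S' ∂(Measure.pi μ)) (∑ i, (c i / 2) ^ 2)
      (Measure.pi μ) := by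
  induction n with
  | zero =>
    have hconst (S) : G S = G finZeroElim := congrArg G (Subsingleton.elim _ _)
    simp [hconst]
  | succ n ih =>
    set ν := Measure.pi fun i : Fin n => μ i.succ
    have hGm : Measurable fun q : Z 0 × (∀ i : Fin n, Z i.succ) => G (Fin.cons q.1 q.2) :=
      hG.comp (measurePreserving_finCons μ).measurable
    have hGzm (z) : Measurable fun S => G (Fin.cons z S) := hGm.comp measurable_prodMk_left
    have hGzc (z S i w) : G (Fin.cons z (Function.update S i w)) ≤ G (Fin.cons z S) + c i.succ :=
      Fin.cons_update z S i w ▸ hGc (Fin.cons z S) i.succ w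
    have hGzi (z) : Integrable (fun S => G (Fin.cons z S)) ν :=
      integrable_pi_of_update_le_add _ (hGzm z) (hGzc z)
    let m : Z 0 → ℝ := fun z => ∫ S, G (Fin.cons z S) ∂ν
    have hm : Measurable m := hGm.stronglyMeasurable.integral_prod_right.measurable
    have hmc (z w) : m w ≤ m z + c 0 := by
      have h (S) : G (Fin.cons w S) ≤ G (Fin.cons z S) + c 0 :=
        Fin.update_cons_zero z S w ▸ hGc (Fin.cons z S) 0 w
      simpa [m, integral_add (hGzi z) (integrable_const _)] using
        integral_mono (hGzi w) ((hGzi z).add (integrable_const _)) h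
    have hmG : ∫ z, m z ∂μ 0 = ∫ S, G S ∂(Measure.pi μ) := by
      have hid := identDistrib_comp_finCons μ hG
      rw [← hid.integral_eq, integral_prod _
        (hid.integrable_iff.2 (integrable_pi_of_update_le_add μ hG hGc))]
    have hsum := hasSubgaussianMGF_add_prod
      (hasSubgaussianMGF_sub_integral_of_le_add (μ := μ 0) hm hmc)
      (V := fun q => G (Fin.cons q.1 q.2) - m q.1)
      (fun z => ih (fun i => μ i.succ) (hGzm z) (hGzc z))
      (hGm.sub (hm.comp measurable_fst)).aemeasurable
    rw [Fin.sum_univ_succ]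
    refine HasSubgaussianMGF.congr_identDistrib ?_
      (identDistrib_comp_finCons μ (hG.sub_const (∫ S, G S ∂(Measure.pi μ))))
    simpa only [hmG, sub_add_sub_cancel'] using hsum

end McDiarmid

theorem bddAbove_range_of_abs_le {T : Type*} {a : T → ℝ} {K : ℝ} (ha : ∀ t, |a t| ≤ K) :
    BddAbove (Set.range a) :=
  ⟨K, Set.forall_mem_range.2 fun t => (abs_le.1 (ha t)).2⟩

section CountableSup

variable {T : Type*} [Nonempty T]

theorem abs_ciSup_le_of_abs_le {a : T → ℝ} {K : ℝ} (ha : ∀ t, |a t| ≤ K) : |⨆ t, a t| ≤ K := by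
  obtain ⟨t⟩ := ‹Nonempty T›
  exact abs_le.2 ⟨(abs_le.1 (ha t)).1.trans (le_ciSup (bddAbove_range_of_abs_le ha) t),
    ciSup_le fun t => (abs_le.1 (ha t)).2⟩

theorem integrable_ciSup_of_abs_le [Countable T] {Ω : Type*} [MeasurableSpace Ω] {μ : Measure Ω}
    [IsFiniteMeasure μ] {F : T → Ω → ℝ} (hF : ∀ t, Measurable (F t)) {K : ℝ}
    (hK : ∀ t ω, |F t ω| ≤ K) : Integrable (fun ω => ⨆ t, F t ω) μ :=
  .of_bound (Measurable.iSup hF).aestronglyMeasurable K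
    (.of_forall fun ω => abs_ciSup_le_of_abs_le fun t => hK t ω)

theorem ciSup_add_ciSup_sub_le_of_abs_sub_le {a u v : T → ℝ}
    (huv : ∀ t t', |u t - u t'| ≤ |v t - v t'|)
    (hadd : BddAbove (Set.range fun t => a t + v t))
    (hsub : BddAbove (Set.range fun t => a t - v t)) :
    (⨆ t, (a t + u t)) + ⨆ t, (a t - u t) ≤ (⨆ t, (a t + v t)) + ⨆ t, (a t - v t) := by
  refine ciSup_add_ciSup_le fun t t' => ?_
  have h := (le_abs_self _).trans (huv t t')
  rcases abs_cases (v t - v t') with ⟨h', -⟩ | ⟨h', -⟩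
  · linarith [le_ciSup hadd t, le_ciSup hsub t']
  · linarith [le_ciSup hadd t', le_ciSup hsub t]

end CountableSup

/-- The sum over a sample `S` of the deviations of `g` from its mean under `μ`, signed as in
`R(θ) - R̂(θ; S)`. -/
noncomputable def centeredSum {Z : Type*} [MeasurableSpace Z] (μ : Measure Z) (g : Z → ℝ) {n : ℕ}
    (S : Fin n → Z) : ℝ :=
  ∑ i, (∫ z, g z ∂μ - g (S i))

section CenteredSum

variable {Z : Type*} [MeasurableSpace Z] {μ : Measure Z} {g : Z → ℝ} {n : ℕ}

theorem centeredSum_cons (z : Z) (S : Fin n → Z) :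
    centeredSum μ g (Fin.cons z S : Fin (n + 1) → Z) = ∫ w, g w ∂μ - g z + centeredSum μ g S := by
  simp only [centeredSum, Fin.sum_univ_succ, Fin.cons_zero, Fin.cons_succ]

theorem centeredSum_eq_mul (hn : n ≠ 0) (S : Fin n → Z) :
    centeredSum μ g S = n * (∫ z, g z ∂μ - 1 / n * ∑ i, g (S i)) := by
  simp only [centeredSum, Finset.sum_sub_distrib, Finset.sum_const, Finset.card_univ,
    Fintype.card_fin, nsmul_eq_mul]
  field_simp

theorem measurable_centeredSum (hg : Measurable g) :
    Measurable fun S : Fin n → Z => centeredSum μ g S :=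
  Finset.measurable_sum _ fun i _ => (hg.comp (measurable_pi_apply i)).const_sub _

theorem centeredSum_update_le {C : ℝ} (hg : ∀ z, g z ∈ Set.Icc 0 C) (S : Fin n → Z) (i : Fin n)
    (z : Z) : centeredSum μ g (Function.update S i z) ≤ centeredSum μ g S + C := by
  have h : centeredSum μ g (Function.update S i z) - centeredSum μ g S = g (S i) - g z := by
    rw [centeredSum, centeredSum, ← Finset.sum_sub_distrib,
      Finset.sum_eq_single i (fun j _ hj => by simp [hj]) (by simp)]
    simp
  linarith [(hg (S i)).2, (hg z).1]

variable [IsProbabilityMeasure μ]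

theorem abs_integral_sub_le {C : ℝ} (hg : ∀ z, |g z| ≤ C) (z : Z) :
    |∫ w, g w ∂μ - g z| ≤ 2 * C := by
  have hmean : |∫ w, g w ∂μ| ≤ C := by
    simpa using norm_integral_le_of_norm_le_const (μ := μ) (f := g) (.of_forall hg)
  linarith [abs_sub (∫ w, g w ∂μ) (g z), hg z]

theorem abs_centeredSum_le {C : ℝ} (hg : ∀ z, |g z| ≤ C) (S : Fin n → Z) :
    |centeredSum μ g S| ≤ n * (2 * C) :=
  (Finset.abs_sum_le_sum_abs _ _).trans
    ((Finset.sum_le_sum fun i _ => abs_integral_sub_le hg (S i)).trans_eq (by simp))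

end CenteredSum

section Symmetrization

variable {Z T : Type*} [MeasurableSpace Z] [Countable T] [Nonempty T] {μ : Measure Z}
  [IsProbabilityMeasure μ] {f u : T → Z → ℝ} {C K U : ℝ}

/-- `a + (∫ f - f z)` averages `a + 2 ∫ f` with `a - 2 f z`, and a mean is at most the mean of the
supremum, so no ghost sample is needed. -/
theorem integral_ciSup_add_integral_sub_le (hf : ∀ t, Measurable (f t)) (hfC : ∀ t z, |f t z| ≤ C)
    {a : T → ℝ} (ha : ∀ t, |a t| ≤ K) :
    ∫ z, ⨆ t, (a t + (∫ w, f t w ∂μ - f t z)) ∂μ ≤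
      ∫ z, ((⨆ t, (a t + 2 * f t z)) + ⨆ t, (a t - 2 * f t z)) / 2 ∂μ := by
  have hfi (t) : Integrable (f t) μ := .of_bound (hf t).aestronglyMeasurable C (.of_forall (hfC t))
  have hadd (t z) : |a t + 2 * f t z| ≤ K + 2 * C := by grind
  have hsub (t z) : |a t - 2 * f t z| ≤ K + 2 * C := by grind
  have hdev (t z) : |a t + (∫ w, f t w ∂μ - f t z)| ≤ K + 2 * C :=
    (abs_add_le _ _).trans (add_le_add (ha t) (abs_integral_sub_le (hfC t) z))
  have hi_add : Integrable (fun z => ⨆ t, (a t + 2 * f t z)) μ :=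
    integrable_ciSup_of_abs_le (fun t => ((hf t).const_mul _).const_add _) hadd
  have hi_sub : Integrable (fun z => ⨆ t, (a t - 2 * f t z)) μ :=
    integrable_ciSup_of_abs_le (fun t => ((hf t).const_mul _).const_sub _) hsub
  have hi_dev : Integrable (fun z => ⨆ t, (a t + (∫ w, f t w ∂μ - f t z))) μ :=
    integrable_ciSup_of_abs_le (fun t => ((hf t).const_sub _).const_add _) hdev
  have hmean (t) : a t + 2 * ∫ w, f t w ∂μ ≤ ∫ w, ⨆ t, (a t + 2 * f t w) ∂μ := by
    calc a t + 2 * ∫ w, f t w ∂μ = ∫ w, (a t + 2 * f t w) ∂μ := by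
          rw [integral_add (integrable_const _) ((hfi t).const_mul 2), integral_const_mul]
          simp
      _ ≤ ∫ w, ⨆ t, (a t + 2 * f t w) ∂μ :=
          integral_mono ((integrable_const _).add ((hfi t).const_mul 2)) hi_add fun w =>
            le_ciSup (bddAbove_range_of_abs_le (hadd · w)) t
  calc ∫ z, ⨆ t, (a t + (∫ w, f t w ∂μ - f t z)) ∂μ
      ≤ ∫ z, ((∫ w, ⨆ t, (a t + 2 * f t w) ∂μ) + ⨆ t, (a t - 2 * f t z)) / 2 ∂μ := by
        refine integral_mono hi_dev (((integrable_const _).add hi_sub).div_const 2) fun z =>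
          ciSup_le fun t => ?_
        linarith [hmean t, le_ciSup (bddAbove_range_of_abs_le (hsub · z)) t]
    _ = ∫ z, ((⨆ t, (a t + 2 * f t z)) + ⨆ t, (a t - 2 * f t z)) / 2 ∂μ := by
        rw [integral_div, integral_div, integral_add (integrable_const _) hi_sub,
          integral_add hi_add hi_sub, integral_const, probReal_univ, one_smul]

theorem integral_ciSup_add_integral_sub_le_of_abs_sub_le (hf : ∀ t, Measurable (f t))
    (hfC : ∀ t z, |f t z| ≤ C) (hu : ∀ t, Measurable (u t)) (huU : ∀ t z, |u t z| ≤ U)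
    (hfu : ∀ t t' z, |2 * f t z - 2 * f t' z| ≤ |u t z - u t' z|)
    {a : T → ℝ} (ha : ∀ t, |a t| ≤ K) :
    ∫ z, ⨆ t, (a t + (∫ w, f t w ∂μ - f t z)) ∂μ ≤
      ∫ z, ((⨆ t, (a t + u t z)) + ⨆ t, (a t - u t z)) / 2 ∂μ := by
  have haddf (t z) : |a t + 2 * f t z| ≤ K + 2 * C := by grind
  have hsubf (t z) : |a t - 2 * f t z| ≤ K + 2 * C := by grind
  have hadd (t z) : |a t + u t z| ≤ K + U := by grind
  have hsub (t z) : |a t - u t z| ≤ K + U := by grind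
  refine (integral_ciSup_add_integral_sub_le hf hfC ha).trans (integral_mono ?_ ?_ fun z => ?_)
  · exact .div_const (.add
      (integrable_ciSup_of_abs_le (fun t => ((hf t).const_mul _).const_add _) haddf)
      (integrable_ciSup_of_abs_le (fun t => ((hf t).const_mul _).const_sub _) hsubf)) 2
  · exact .div_const (.add
      (integrable_ciSup_of_abs_le (fun t => (hu t).const_add _) hadd)
      (integrable_ciSup_of_abs_le (fun t => (hu t).const_sub _) hsub)) 2
  · exact div_le_div_of_nonneg_right (ciSup_add_ciSup_sub_le_of_abs_sub_le (hfu · · z)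
      (bddAbove_range_of_abs_le (hadd · z)) (bddAbove_range_of_abs_le (hsub · z))) two_pos.le

theorem integrable_ciSup_add_centeredSum_add (hf : ∀ t, Measurable (f t))
    (hfC : ∀ t z, |f t z| ≤ C) (hu : ∀ t, Measurable (u t)) (huU : ∀ t z, |u t z| ≤ U)
    {b : T → ℝ} (hb : ∀ t, |b t| ≤ K) {n : ℕ} :
    Integrable (fun q : Z × (Fin n → Z) => ⨆ t, (b t + centeredSum μ (f t) q.2 + u t q.1))
      (μ.prod (Measure.pi fun _ : Fin n => μ)) :=
  integrable_ciSup_of_abs_le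
    (fun t => (((measurable_centeredSum (hf t)).comp measurable_snd).const_add _).add
      ((hu t).comp measurable_fst))
    fun t q => (abs_add_three _ _ _).trans
      (add_le_add_three (hb t) (abs_centeredSum_le (hfC t) q.2) (huU t q.1))

theorem integral_ciSup_add_centeredSum_succ_le (hf : ∀ t, Measurable (f t))
    (hfC : ∀ t z, |f t z| ≤ C) (hu : ∀ t, Measurable (u t)) (huU : ∀ t z, |u t z| ≤ U)
    (hfu : ∀ t t' z, |2 * f t z - 2 * f t' z| ≤ |u t z - u t' z|)
    {b : T → ℝ} (hb : ∀ t, |b t| ≤ K) {n : ℕ} {B : ℝ}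
    (hB : ∀ z, ((∫ S, ⨆ t, (b t + centeredSum μ (f t) S + u t z) ∂(Measure.pi fun _ : Fin n => μ)) +
      ∫ S, ⨆ t, (b t + centeredSum μ (f t) S - u t z) ∂(Measure.pi fun _ : Fin n => μ)) / 2 ≤ B) :
    ∫ S, ⨆ t, (b t + centeredSum μ (f t) S) ∂(Measure.pi fun _ : Fin (n + 1) => μ) ≤ B := by
  set ν := Measure.pi fun _ : Fin n => μ
  have hcons (z) (S : Fin n → Z) (t) : b t + centeredSum μ (f t) (Fin.cons z S : Fin (n + 1) → Z) =
      b t + centeredSum μ (f t) S + (∫ w, f t w ∂μ - f t z) := by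
    rw [centeredSum_cons]
    ring
  have hid := identDistrib_comp_finCons (fun _ : Fin (n + 1) => μ)
    (.iSup fun t => (measurable_centeredSum (μ := μ) (hf t)).const_add (b t))
  simp only [hcons] at hid
  have hi : Integrable (fun q : Z × (Fin n → Z) =>
      ⨆ t, (b t + centeredSum μ (f t) q.2 + (∫ w, f t w ∂μ - f t q.1))) (μ.prod ν) :=
    integrable_ciSup_add_centeredSum_add hf hfC (fun t => (hf t).const_sub _)
      (fun t => abs_integral_sub_le (hfC t)) hb
  have hi_add := integrable_ciSup_add_centeredSum_add (μ := μ) (n := n) hf hfC hu huU hb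
  have hi_sub := integrable_ciSup_add_centeredSum_add (μ := μ) (n := n) hf hfC
    (fun t => (hu t).neg) (U := U) (by simpa using huU) hb
  simp only [Pi.neg_apply, ← sub_eq_add_neg] at hi_sub
  have hi_avg := (hi_add.add hi_sub).div_const 2
  calc ∫ S, ⨆ t, (b t + centeredSum μ (f t) S) ∂(Measure.pi fun _ : Fin (n + 1) => μ)
      = ∫ S, ∫ z, ⨆ t, (b t + centeredSum μ (f t) S + (∫ w, f t w ∂μ - f t z)) ∂μ ∂ν := by
        rw [← hid.integral_eq, integral_prod_symm _ hi]
    _ ≤ ∫ S, ∫ z, ((⨆ t, (b t + centeredSum μ (f t) S + u t z)) +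
          ⨆ t, (b t + centeredSum μ (f t) S - u t z)) / 2 ∂μ ∂ν :=
        integral_mono hi.integral_prod_right hi_avg.integral_prod_right fun S =>
          integral_ciSup_add_integral_sub_le_of_abs_sub_le hf hfC hu huU hfu fun t =>
            (abs_add_le _ _).trans (add_le_add (hb t) (abs_centeredSum_le (hfC t) S))
    _ = ∫ z, ∫ S, ((⨆ t, (b t + centeredSum μ (f t) S + u t z)) +
          ⨆ t, (b t + centeredSum μ (f t) S - u t z)) / 2 ∂ν ∂μ :=
        (integral_integral_swap hi_avg).symm
    _ ≤ ∫ _, B ∂μ := by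
        refine integral_mono_ae hi_avg.integral_prod_left (integrable_const B) ?_
        filter_upwards [hi_add.prod_right_ae, hi_sub.prod_right_ae] with z hadd hsub
        rw [integral_div, integral_add hadd hsub]
        exact hB z
    _ = B := by simp

end Symmetrization

section LinearlyDominated

variable {Z T E : Type*} [MeasurableSpace Z] [Countable T] [Nonempty T] [NormedAddCommGroup E]
  [InnerProductSpace ℝ E]

theorem sqrt_norm_add_sq_add_sqrt_norm_sub_sq_le (w x : E) {c : ℝ} (hc : 0 ≤ c) :
    (√(‖w + x‖ ^ 2 + c) + √(‖w - x‖ ^ 2 + c)) / 2 ≤ √(‖w‖ ^ 2 + ‖x‖ ^ 2 + c) := by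
  refine Real.le_sqrt_of_sq_le ?_
  have h_add := Real.sq_sqrt (add_nonneg (sq_nonneg ‖w + x‖) hc)
  have h_sub := Real.sq_sqrt (add_nonneg (sq_nonneg ‖w - x‖) hc)
  have h_par := parallelogram_law_with_norm ℝ w x
  nlinarith [sq_nonneg (√(‖w + x‖ ^ 2 + c) - √(‖w - x‖ ^ 2 + c))]

theorem abs_two_mul_inner_le {x y : E} {κ r : ℝ} (hx : ‖x‖ ≤ κ) (hy : ‖y‖ ≤ r) :
    |2 * ⟪x, y⟫| ≤ 2 * (κ * r) := by
  rw [abs_mul, abs_two]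
  exact mul_le_mul_of_nonneg_left ((abs_real_inner_le_norm x y).trans
    (mul_le_mul hx hy (norm_nonneg y) ((norm_nonneg x).trans hx))) two_pos.le

variable [MeasurableSpace E] [BorelSpace E] [SecondCountableTopology E] {μ : Measure Z}
  [IsProbabilityMeasure μ] {f : T → Z → ℝ} {v : Z → E} {τ : T → E} {C κ r : ℝ} {n : ℕ}

/-- Carrying the linear functional `2 * ⟪w, τ t⟫` through the induction is what gives growth `√n`:
each revealed sample point moves `w` to `w ± v z`, so `‖w‖ ^ 2` grows by `‖v z‖ ^ 2` on average. -/
theorem integral_ciSup_two_mul_inner_add_centeredSum_le (hf : ∀ t, Measurable (f t))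
    (hfC : ∀ t z, |f t z| ≤ C) (hv : Measurable v) (hvκ : ∀ z, ‖v z‖ ≤ κ) (hr : 0 ≤ r)
    (hτ : ∀ t, ‖τ t‖ ≤ r) (hfv : ∀ t t' z, |f t z - f t' z| ≤ |⟪v z, τ t - τ t'⟫|) (w : E) :
    ∫ S, ⨆ t, (2 * ⟪w, τ t⟫ + centeredSum μ (f t) S) ∂(Measure.pi fun _ : Fin n => μ) ≤
      2 * r * √(‖w‖ ^ 2 + n * κ ^ 2) := by
  induction n generalizing w with
  | zero =>
    suffices ⨆ t, 2 * ⟪w, τ t⟫ ≤ 2 * r * ‖w‖ by simpa [centeredSum]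
    exact ciSup_le fun t => by linarith [(abs_le.1 (abs_two_mul_inner_le le_rfl (hτ t) (x := w))).2]
  | succ n ih =>
    have hfu (t t' z) : |2 * f t z - 2 * f t' z| ≤ |2 * ⟪v z, τ t⟫ - 2 * ⟪v z, τ t'⟫| := by
      rw [← mul_sub, ← mul_sub, abs_mul, abs_mul, ← inner_sub_right]
      exact mul_le_mul_of_nonneg_left (hfv t t' z) (abs_nonneg 2)
    refine integral_ciSup_add_centeredSum_succ_le hf hfC
      (fun t => (hv.inner measurable_const).const_mul 2)
      (fun t z => abs_two_mul_inner_le (hvκ z) (hτ t)) hfu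
      (fun t => abs_two_mul_inner_le le_rfl (hτ t)) fun z => ?_
    have hadd (S : Fin n → Z) (t) : 2 * ⟪w, τ t⟫ + centeredSum μ (f t) S + 2 * ⟪v z, τ t⟫ =
        2 * ⟪w + v z, τ t⟫ + centeredSum μ (f t) S := by
      rw [inner_add_left]
      ring
    have hsub (S : Fin n → Z) (t) : 2 * ⟪w, τ t⟫ + centeredSum μ (f t) S - 2 * ⟪v z, τ t⟫ =
        2 * ⟪w - v z, τ t⟫ + centeredSum μ (f t) S := by
      rw [inner_sub_left]
      ring
    simp only [hadd, hsub]
    calc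
      _ ≤ 2 * r * ((√(‖w + v z‖ ^ 2 + n * κ ^ 2) + √(‖w - v z‖ ^ 2 + n * κ ^ 2)) / 2) := by
          linarith [ih (w + v z), ih (w - v z)]
      _ ≤ 2 * r * √(‖w‖ ^ 2 + ‖v z‖ ^ 2 + n * κ ^ 2) := by
          gcongr
          exact sqrt_norm_add_sq_add_sqrt_norm_sub_sq_le w (v z) (by positivity)
      _ ≤ 2 * r * √(‖w‖ ^ 2 + (n + 1 : ℕ) * κ ^ 2) := by
          refine mul_le_mul_of_nonneg_left (Real.sqrt_le_sqrt ?_) (by positivity)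
          push_cast
          linarith [pow_le_pow_left₀ (norm_nonneg _) (hvκ z) 2]

theorem measureReal_le_ciSup_centeredSum_le (hf : ∀ t, Measurable (f t))
    (hfC : ∀ t z, f t z ∈ Set.Icc 0 C) (hv : Measurable v) (hvκ : ∀ z, ‖v z‖ ≤ κ) (hr : 0 ≤ r)
    (hτ : ∀ t, ‖τ t‖ ≤ r) (hfv : ∀ t t' z, |f t z - f t' z| ≤ |⟪v z, τ t - τ t'⟫|)
    {ε : ℝ} (hε : 0 ≤ ε) :
    (Measure.pi fun _ : Fin n => μ).real
        {S | 2 * r * (√n * κ) + ε ≤ ⨆ t, centeredSum μ (f t) S} ≤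
      Real.exp (-(2 * ε ^ 2 / (n * C ^ 2))) := by
  obtain ⟨t₀⟩ := ‹Nonempty T›
  obtain ⟨z₀⟩ : Nonempty Z := μ.nonempty_of_neZero
  have hC : 0 ≤ C := (hfC t₀ z₀).1.trans (hfC t₀ z₀).2
  have hκ : 0 ≤ κ := (norm_nonneg _).trans (hvκ z₀)
  lift C to NNReal using hC
  have hfabs (t z) : |f t z| ≤ C := by
    rw [abs_of_nonneg (hfC t z).1]
    exact (hfC t z).2
  have hmean : ∫ S, ⨆ t, centeredSum μ (f t) S ∂(Measure.pi fun _ : Fin n => μ) ≤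
      2 * r * (√n * κ) := by
    simpa [Real.sqrt_sq hκ] using
      integral_ciSup_two_mul_inner_add_centeredSum_le (μ := μ) (n := n) hf hfabs hv hvκ hr hτ hfv 0
  have hupdate (S : Fin n → Z) (i z) : ⨆ t, centeredSum μ (f t) (Function.update S i z) ≤
      (⨆ t, centeredSum μ (f t) S) + C :=
    ciSup_le fun t => (centeredSum_update_le (hfC t) S i z).trans (add_le_add_left
      (le_ciSup (bddAbove_range_of_abs_le fun t => abs_centeredSum_le (hfabs t) S) t) C)
  have hsub := hasSubgaussianMGF_sub_integral_of_update_le_add (fun _ : Fin n => μ)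
    (.iSup fun t => measurable_centeredSum (μ := μ) (hf t)) (c := fun _ => C) hupdate
  refine (measureReal_mono fun S hS => ?_).trans ((hsub.measure_ge_le hε).trans_eq ?_)
  · exact le_sub_iff_add_le'.2 ((add_le_add_left hmean ε).trans hS)
  · simp only [Finset.sum_const, Finset.card_univ, Fintype.card_fin, nsmul_eq_mul, NNReal.coe_mul,
      NNReal.coe_natCast, NNReal.coe_pow, NNReal.coe_div, NNReal.coe_ofNat]
    ring_nf

theorem ofReal_le_measure_forall_integral_sub_average_le (hf : ∀ t, Measurable (f t)) (hC : 0 < C)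
    (hfC : ∀ t z, f t z ∈ Set.Icc 0 C) (hv : Measurable v) (hvκ : ∀ z, ‖v z‖ ≤ κ) (hr : 0 ≤ r)
    (hτ : ∀ t, ‖τ t‖ ≤ r) (hfv : ∀ t t' z, |f t z - f t' z| ≤ |⟪v z, τ t - τ t'⟫|)
    (hn : 0 < n) {δ : ℝ} (hδ : δ ∈ Set.Ioo 0 1) :
    ENNReal.ofReal (1 - δ) ≤ (Measure.pi fun _ : Fin n => μ)
      {S | ∀ t, ∫ z, f t z ∂μ - 1 / n * ∑ i, f t (S i) ≤
        2 * r * κ / √n + C * √(Real.log (1 / δ) / (2 * n))} := by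
  have hn' : (0 : ℝ) < n := Nat.cast_pos.2 hn
  have hlog : 0 ≤ Real.log (1 / δ) := Real.log_nonneg ((one_le_div hδ.1).2 hδ.2.le)
  set ε := n * (C * √(Real.log (1 / δ) / (2 * n)))
  set bad := {S : Fin n → Z | 2 * r * (√n * κ) + ε ≤ ⨆ t, centeredSum μ (f t) S}
  have hbad_meas : MeasurableSet bad :=
    measurableSet_le measurable_const (.iSup fun t => measurable_centeredSum (hf t))
  have hbad : (Measure.pi fun _ : Fin n => μ).real bad ≤ δ := by
    refine (measureReal_le_ciSup_centeredSum_le hf hfC hv hvκ hr hτ hfv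
      (by positivity)).trans_eq ?_
    have hexp : 2 * ε ^ 2 / (n * C ^ 2) = Real.log (1 / δ) := by
      rw [mul_pow, mul_pow, Real.sq_sqrt (by positivity)]
      field_simp
    rw [hexp, one_div, Real.log_inv, neg_neg, Real.exp_log hδ.1]
  have hscale : 2 * r * (√n * κ) + ε =
      n * (2 * r * κ / √n + C * √(Real.log (1 / δ) / (2 * n))) := by
    rw [mul_add, mul_div_left_comm, Real.div_sqrt]
    ring
  have hgood : ENNReal.ofReal (1 - δ) ≤ (Measure.pi fun _ : Fin n => μ) badᶜ := by
    rw [← ofReal_measureReal, probReal_compl_eq_one_sub hbad_meas]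
    exact ENNReal.ofReal_le_ofReal (sub_le_sub_left hbad 1)
  refine hgood.trans (measure_mono fun S hS t => ?_)
  have hbdd : BddAbove (Set.range fun t => centeredSum μ (f t) S) :=
    bddAbove_range_of_abs_le fun t => abs_centeredSum_le
      (fun z => (abs_of_nonneg (hfC t z).1).trans_le (hfC t z).2) S
  refine le_of_mul_le_mul_left ?_ hn'
  rw [← centeredSum_eq_mul hn.ne', ← hscale]
  exact (le_ciSup hbdd t).trans (not_le.1 (Set.notMem_ofPred_iff.1 hS)).le

theorem ofReal_le_measure_forall_integral_sub_average_le_of_ae (hf : ∀ t, Measurable (f t))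
    (hC : 0 < C) (hv : Measurable v) (hr : 0 ≤ r) (hτ : ∀ t, ‖τ t‖ ≤ r)
    (hae : ∀ᵐ z ∂μ, ‖v z‖ ≤ κ ∧ (∀ t, f t z ∈ Set.Icc 0 C) ∧
      ∀ t t', |f t z - f t' z| ≤ |⟪v z, τ t - τ t'⟫|)
    (hn : 0 < n) {δ : ℝ} (hδ : δ ∈ Set.Ioo 0 1) :
    ENNReal.ofReal (1 - δ) ≤ (Measure.pi fun _ : Fin n => μ)
      {S | ∀ t, ∫ z, f t z ∂μ - 1 / n * ∑ i, f t (S i) ≤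
        2 * r * κ / √n + C * √(Real.log (1 / δ) / (2 * n))} := by
  obtain ⟨G, hGae, hGm, hG⟩ := hae.exists_measurable_mem
  have hκ : 0 ≤ κ := by
    obtain ⟨z, hz⟩ := hae.exists
    exact (norm_nonneg _).trans hz.1
  have h := ofReal_le_measure_forall_integral_sub_average_le (μ := μ)
    (f := fun t => G.indicator (f t)) (v := G.indicator v) (τ := τ) (κ := κ)
    (fun t => (hf t).indicator hGm) hC (fun t z => ?_) (hv.indicator hGm) (fun z => ?_) hr hτ
    (fun t t' z => ?_) hn hδ
  · have hmean (t) : ∫ z, G.indicator (f t) z ∂μ = ∫ z, f t z ∂μ :=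
      integral_congr_ae (by filter_upwards [hGae] with z hz using Set.indicator_of_mem hz _)
    have hsample : ∀ᵐ S ∂(Measure.pi fun _ : Fin n => μ), ∀ i, S i ∈ G :=
      ae_all_iff.2 fun i => (Measure.tendsto_eval_ae_ae (μ := fun _ : Fin n => μ)).eventually hGae
    refine h.trans (measure_mono_ae ?_)
    filter_upwards [hsample] with S hS hbound t
    simpa only [hmean, Set.indicator_of_mem (hS _)] using hbound t
  all_goals by_cases hz : z ∈ G
  · simpa [hz] using (hG z hz).2.1 t
  · simpa [hz] using hC.le
  · simpa [hz] using (hG z hz).1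
  · simpa [hz] using hκ
  · simpa [hz] using (hG z hz).2.2 t t'
  · simp [hz]

end LinearlyDominated

section UniformDeviation

variable {E : Type*} [NormedAddCommGroup E] [InnerProductSpace ℝ E]

theorem continuous_of_abs_sub_le_abs_inner {g : E → ℝ} {x : E}
    (hg : ∀ θ θ', |g θ - g θ'| ≤ |⟪x, θ - θ'⟫|) : Continuous g :=
  (LipschitzWith.of_dist_le_mul (K := ‖x‖₊) fun θ θ' => (hg θ θ').trans
    ((abs_real_inner_le_norm _ _).trans_eq (by rw [coe_nnnorm, dist_eq_norm]))).continuous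

theorem ofReal_le_measure_forall_norm_le_integral_sub_average_le [MeasurableSpace E] [BorelSpace E]
    [SecondCountableTopology E] {Z : Type*} [MeasurableSpace Z] {μ : Measure Z}
    [IsProbabilityMeasure μ] {f : E → Z → ℝ} (hf : ∀ θ, Measurable (f θ)) {v : Z → E}
    (hv : Measurable v) {C κ r : ℝ} (hC : 0 < C) (hr : 0 ≤ r)
    (hae : ∀ᵐ z ∂μ, ‖v z‖ ≤ κ ∧ (∀ θ, ‖θ‖ ≤ r → f θ z ∈ Set.Icc 0 C) ∧
      ∀ θ θ', |f θ z - f θ' z| ≤ |⟪v z, θ - θ'⟫|)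
    {n : ℕ} (hn : 0 < n) {δ : ℝ} (hδ : δ ∈ Set.Ioo 0 1) :
    ENNReal.ofReal (1 - δ) ≤ (Measure.pi fun _ : Fin n => μ)
      {S | ∀ θ, ‖θ‖ ≤ r → ∫ z, f θ z ∂μ - 1 / n * ∑ i, f θ (S i) ≤
        2 * r * κ / √n + C * √(Real.log (1 / δ) / (2 * n))} := by
  let ball : Set E := Metric.closedBall 0 r
  have : Nonempty ball := ⟨0, Metric.mem_closedBall_self hr⟩
  have hball (θ : ball) : ‖(θ : E)‖ ≤ r := mem_closedBall_zero_iff.1 θ.2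
  let τ : ℕ → ball := TopologicalSpace.denseSeq ball
  have hcont {z} (hz : ∀ θ θ', |f θ z - f θ' z| ≤ |⟪v z, θ - θ'⟫|) :
      Continuous fun θ : ball => f θ z :=
    (continuous_of_abs_sub_le_abs_inner hz).comp continuous_subtype_val
  have hmean_cont : Continuous fun θ : ball => ∫ z, f θ z ∂μ := by
    refine continuous_of_dominated (fun θ => (hf θ).aestronglyMeasurable) (bound := fun _ => C)
      (fun θ => ?_) (integrable_const C) (hae.mono fun z hz => hcont hz.2.2)
    filter_upwards [hae] with z hz
    have hmem := hz.2.1 θ (hball θ)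
    exact (Real.norm_of_nonneg hmem.1).trans_le hmem.2
  have hsample : ∀ᵐ S ∂(Measure.pi fun _ : Fin n => μ), ∀ i, Continuous fun θ : ball => f θ (S i) :=
    ae_all_iff.2 fun i => (Measure.tendsto_eval_ae_ae (μ := fun _ : Fin n => μ)).eventually
      (hae.mono fun z hz => hcont hz.2.2)
  refine (ofReal_le_measure_forall_integral_sub_average_le_of_ae (μ := μ)
    (f := fun k => f (τ k)) (τ := fun k => (τ k : E)) (fun k => hf (τ k)) hC hv hr
    (fun k => hball (τ k)) (hae.mono fun z hz => ⟨hz.1, fun k => hz.2.1 _ (hball (τ k)),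
      fun k k' => hz.2.2 _ _⟩) hn hδ).trans (measure_mono_ae ?_)
  filter_upwards [hsample] with S hS hbound θ hθ
  have hclosed : IsClosed {θ : ball | ∫ z, f θ z ∂μ - 1 / n * ∑ i, f θ (S i) ≤
      2 * r * κ / √n + C * √(Real.log (1 / δ) / (2 * n))} :=
    isClosed_le (hmean_cont.sub ((continuous_finsetSum _ fun i _ => hS i).const_mul _))
      continuous_const
  exact isClosed_property (TopologicalSpace.denseRange_denseSeq ball) hclosed hbound
    ⟨θ, mem_closedBall_zero_iff.2 hθ⟩

end UniformDeviation

section RegularizedERM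

theorem norm_le_of_forall_add_mul_norm_sq_le {E : Type*} [NormedAddCommGroup E] [NormedSpace ℝ E]
    {g : E → ℝ} {L lam : ℝ} (hL : 0 ≤ L) (hlam : 0 < lam)
    (hg : ∀ θ θ', |g θ - g θ'| ≤ L * ‖θ - θ'‖) {a : E}
    (ha : ∀ θ, g a + lam * ‖a‖ ^ 2 ≤ g θ + lam * ‖θ‖ ^ 2) : ‖a‖ ≤ L / (2 * lam) := by
  by_contra! h
  set ρ := L / (2 * lam)
  have hρ : 0 ≤ ρ := by positivity
  have ha_pos : 0 < ‖a‖ := hρ.trans_lt h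
  set c := ρ / ‖a‖
  have hca : c * ‖a‖ = ρ := div_mul_cancel₀ _ ha_pos.ne'
  have hc : c ≤ 1 := (div_le_one ha_pos).2 h.le
  have hnorm : ‖c • a‖ = ρ := by rw [norm_smul, Real.norm_of_nonneg (by positivity), hca]
  have hdist : ‖c • a - a‖ = ‖a‖ - ρ := by
    rw [norm_sub_rev, show a - c • a = (1 - c) • a by rw [sub_smul, one_smul], norm_smul,
      Real.norm_of_nonneg (sub_nonneg.2 hc), sub_mul, one_mul, hca]
  have hLip := (le_abs_self _).trans (hg (c • a) a)
  have hmin := ha (c • a)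
  rw [hdist, show L = 2 * lam * ρ from (mul_div_cancel₀ _ (by positivity)).symm] at hLip
  rw [hnorm] at hmin
  -- Shrinking `a` to norm `ρ` would save `lam * (‖a‖ - ρ) ^ 2`.
  nlinarith [mul_pos hlam (pow_pos (sub_pos.2 h) 2)]

theorem inv_sqrt_add_half_sqrt_log_le {δ : ℝ} (hδ : δ ∈ Set.Ioo 0 1) {n : ℕ} (hn : 0 < n) :
    1 / √n + √(Real.log (1 / δ) / (2 * n)) / 2 ≤ 2 * √(Real.log (2 / δ) / (2 * n)) := by
  have hn' : (0 : ℝ) < n := Nat.cast_pos.2 hn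
  have hlog : 0 ≤ Real.log (1 / δ) := Real.log_nonneg ((one_le_div hδ.1).2 hδ.2.le)
  have hlog_split : Real.log (2 / δ) = Real.log 2 + Real.log (1 / δ) := by
    rw [← Real.log_mul two_ne_zero (one_div_pos.2 hδ.1).ne', mul_one_div]
  have hsq : √(Real.log (2 / δ) / (2 * n)) ^ 2 =
      Real.log 2 / 2 * (1 / √n) ^ 2 + √(Real.log (1 / δ) / (2 * n)) ^ 2 := by
    have hlog_two_nonneg : 0 ≤ Real.log 2 := Real.log_nonneg one_le_two
    rw [hlog_split, div_pow,
      Real.sq_sqrt (div_nonneg (add_nonneg hlog_two_nonneg hlog) (by positivity)),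
      Real.sq_sqrt (div_nonneg hlog (by positivity)), Real.sq_sqrt hn'.le]
    field_simp
  have hlog_two := mul_le_mul_of_nonneg_right Real.log_two_gt_d9.le (sq_nonneg (1 / √(n : ℝ)))
  refine le_of_sq_le_sq ?_ (by positivity)
  nlinarith [sq_nonneg (1 / √(n : ℝ) - 2 * √(Real.log (1 / δ) / (2 * n)))]

/-- The empirical risk of the linear predictor `x ↦ ⟪x, θ⟫` for a loss `ℓ y t` that compares the
outcome `y` with the prediction `t`. -/
noncomputable def linearEmpRisk {E Y : Type*} [NormedAddCommGroup E] [InnerProductSpace ℝ E]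
    (ℓ : Y → ℝ → ℝ) {n : ℕ} (S : Fin n → E × Y) (θ : E) : ℝ :=
  1 / n * ∑ i, ℓ (S i).2 ⟪(S i).1, θ⟫

variable {E Y : Type*} [NormedAddCommGroup E] [InnerProductSpace ℝ E] {ℓ : Y → ℝ → ℝ}
  {M κ b lam : ℝ} {n : ℕ}

theorem abs_loss_inner_sub_le (hM : 0 ≤ M) (hℓ : ∀ y t t', |ℓ y t - ℓ y t'| ≤ M * |t - t'|)
    (y : Y) (x θ θ' : E) : |ℓ y ⟪x, θ⟫ - ℓ y ⟪x, θ'⟫| ≤ |⟪M • x, θ - θ'⟫| := by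
  rw [real_inner_smul_left, abs_mul, abs_of_nonneg hM, inner_sub_right]
  exact hℓ y _ _

theorem abs_linearEmpRisk_sub_le (hM : 0 ≤ M) (hκ : 0 ≤ κ)
    (hℓ : ∀ y t t', |ℓ y t - ℓ y t'| ≤ M * |t - t'|) {S : Fin n → E × Y}
    (hS : ∀ i, ‖(S i).1‖ ≤ κ) (θ θ' : E) :
    |linearEmpRisk ℓ S θ - linearEmpRisk ℓ S θ'| ≤ M * κ * ‖θ - θ'‖ := by
  have hpoint (i) : |ℓ (S i).2 ⟪(S i).1, θ⟫ - ℓ (S i).2 ⟪(S i).1, θ'⟫| ≤ M * κ * ‖θ - θ'‖ := by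
    refine (abs_loss_inner_sub_le hM hℓ _ _ _ _).trans ((abs_real_inner_le_norm _ _).trans ?_)
    rw [norm_smul, Real.norm_of_nonneg hM]
    gcongr
    exact hS i
  calc |linearEmpRisk ℓ S θ - linearEmpRisk ℓ S θ'|
      = 1 / n * |∑ i, (ℓ (S i).2 ⟪(S i).1, θ⟫ - ℓ (S i).2 ⟪(S i).1, θ'⟫)| := by
        rw [linearEmpRisk, linearEmpRisk, ← mul_sub, ← Finset.sum_sub_distrib, abs_mul,
          abs_of_nonneg (by positivity)]
    _ ≤ 1 / n * (n * (M * κ * ‖θ - θ'‖)) := by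
        gcongr
        exact (Finset.abs_sum_le_sum_abs _ _).trans
          ((Finset.sum_le_sum fun i _ => hpoint i).trans_eq (by simp))
    _ ≤ M * κ * ‖θ - θ'‖ := by
        rw [← mul_assoc]
        exact mul_le_of_le_one_left (by positivity) (by rw [one_div]; exact inv_mul_le_one)

theorem loss_inner_mem_Icc (hM : 0 ≤ M) (hℓ : ∀ y t t', |ℓ y t - ℓ y t'| ≤ M * |t - t'|)
    (hℓ₀ : ∀ y t, 0 ≤ ℓ y t) {y : Y} (hy : ℓ y 0 ≤ b) {x θ : E} {r : ℝ} (hx : ‖x‖ ≤ κ)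
    (hθ : ‖θ‖ ≤ r) : ℓ y ⟪x, θ⟫ ∈ Set.Icc 0 (b + M * κ * r) := by
  have hinner : M * |⟪x, θ⟫| ≤ M * (κ * r) :=
    mul_le_mul_of_nonneg_left ((abs_real_inner_le_norm x θ).trans
      (mul_le_mul hx hθ (norm_nonneg θ) ((norm_nonneg x).trans hx))) hM
  have hdiff := (le_abs_self _).trans (hℓ y ⟪x, θ⟫ 0)
  rw [sub_zero] at hdiff
  exact ⟨hℓ₀ y _, by linarith⟩

variable [MeasurableSpace E] [BorelSpace E] [SecondCountableTopology E] [MeasurableSpace Y]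
  {μ : Measure (E × Y)} [IsProbabilityMeasure μ]

theorem ofReal_le_measure_forall_norm_le_risk_sub_le (hℓm : Measurable (Function.uncurry ℓ))
    (hM : 0 ≤ M) (hℓ : ∀ y t t', |ℓ y t - ℓ y t'| ≤ M * |t - t'|) (hℓ₀ : ∀ y t, 0 ≤ ℓ y t)
    (hκ : 0 ≤ κ) (hb : 0 < b) (hμ : ∀ᵐ z ∂μ, ‖z.1‖ ≤ κ ∧ ℓ z.2 0 ≤ b) {r : ℝ} (hr : 0 ≤ r)
    (hn : 0 < n) {δ : ℝ} (hδ : δ ∈ Set.Ioo 0 1) :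
    ENNReal.ofReal (1 - δ) ≤ (Measure.pi fun _ : Fin n => μ)
      {S | ∀ θ, ‖θ‖ ≤ r → ∫ z, ℓ z.2 ⟪z.1, θ⟫ ∂μ - linearEmpRisk ℓ S θ ≤
        2 * r * (M * κ) / √n + (b + M * κ * r) * √(Real.log (1 / δ) / (2 * n))} := by
  refine ofReal_le_measure_forall_norm_le_integral_sub_average_le
    (f := fun θ (z : E × Y) => ℓ z.2 ⟪z.1, θ⟫) (v := fun z : E × Y => M • z.1)
    (fun θ => hℓm.comp (measurable_snd.prodMk (measurable_fst.inner measurable_const)))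
    (measurable_fst.const_smul M) (by positivity) hr ?_ hn hδ
  filter_upwards [hμ] with z ⟨hx, hy⟩
  refine ⟨?_, fun θ hθ => loss_inner_mem_Icc hM hℓ hℓ₀ hy hx hθ,
    abs_loss_inner_sub_le hM hℓ z.2 z.1⟩
  rw [norm_smul, Real.norm_of_nonneg hM]
  exact mul_le_mul_of_nonneg_left hx hM

theorem ofReal_le_measure_forall_isMin_risk_sub_le (hℓm : Measurable (Function.uncurry ℓ))
    (hM : 0 ≤ M) (hℓ : ∀ y t t', |ℓ y t - ℓ y t'| ≤ M * |t - t'|) (hℓ₀ : ∀ y t, 0 ≤ ℓ y t)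
    (hb : 0 < b) (hμ : ∀ᵐ z ∂μ, ‖z.1‖ ≤ κ ∧ ℓ z.2 0 ≤ b) (hlam : 0 < lam)
    (hn : 0 < n) {δ : ℝ} (hδ : δ ∈ Set.Ioo 0 1) :
    ENNReal.ofReal (1 - δ) ≤ (Measure.pi fun _ : Fin n => μ)
      {S | ∀ θ, (∀ θ', linearEmpRisk ℓ S θ + lam * ‖θ‖ ^ 2 ≤
            linearEmpRisk ℓ S θ' + lam * ‖θ'‖ ^ 2) →
        ∫ z, ℓ z.2 ⟪z.1, θ⟫ ∂μ - linearEmpRisk ℓ S θ ≤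
          (2 * ((M * κ) ^ 2 / lam) + b) * √(Real.log (2 / δ) / (2 * n))} := by
  have hκ : 0 ≤ κ := by
    obtain ⟨z, hz⟩ := hμ.exists
    exact (norm_nonneg _).trans hz.1
  have hsample : ∀ᵐ S ∂(Measure.pi fun _ : Fin n => μ), ∀ i, ‖(S i).1‖ ≤ κ :=
    ae_all_iff.2 fun i => (Measure.tendsto_eval_ae_ae (μ := fun _ : Fin n => μ)).eventually
      (hμ.mono fun z hz => hz.1)
  refine (ofReal_le_measure_forall_norm_le_risk_sub_le hℓm hM hℓ hℓ₀ hκ hb hμ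
    (r := M * κ / (2 * lam)) (by positivity) hn hδ).trans (measure_mono_ae ?_)
  filter_upwards [hsample] with S hS hbound θ hθ
  have hnorm : ‖θ‖ ≤ M * κ / (2 * lam) :=
    norm_le_of_forall_add_mul_norm_sq_le (by positivity) hlam
      (abs_linearEmpRisk_sub_le hM hκ hℓ hS) hθ
  have hlog_le : √(Real.log (1 / δ) / (2 * n)) ≤ √(Real.log (2 / δ) / (2 * n)) := by
    have := hδ.1
    gcongr
    norm_num
  calc ∫ z, ℓ z.2 ⟪z.1, θ⟫ ∂μ - linearEmpRisk ℓ S θ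
      ≤ 2 * (M * κ / (2 * lam)) * (M * κ) / √n +
          (b + M * κ * (M * κ / (2 * lam))) * √(Real.log (1 / δ) / (2 * n)) := hbound θ hnorm
    _ = (M * κ) ^ 2 / lam * (1 / √n + √(Real.log (1 / δ) / (2 * n)) / 2) +
          b * √(Real.log (1 / δ) / (2 * n)) := by
        field_simp
        ring
    _ ≤ (M * κ) ^ 2 / lam * (2 * √(Real.log (2 / δ) / (2 * n))) +
          b * √(Real.log (2 / δ) / (2 * n)) := by
        gcongr
        exact inv_sqrt_add_half_sqrt_log_le hδ hn
    _ = (2 * ((M * κ) ^ 2 / lam) + b) * √(Real.log (2 / δ) / (2 * n)) := by ring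

end RegularizedERM

section EpsLoss

variable {α ε₁ ε₂ : ℝ}

theorem epsLoss_nonneg (hα : α ∈ Set.Icc 0 1) (s y : ℝ) : 0 ≤ epsLoss α ε₁ ε₂ s y :=
  add_nonneg (mul_nonneg (sub_nonneg.2 hα.2) (le_max_right _ _))
    (mul_nonneg hα.1 (le_max_right _ _))

theorem abs_epsLoss_sub_le (hα : α ∈ Set.Icc 0 1) (s y y' : ℝ) :
    |epsLoss α ε₁ ε₂ s y - epsLoss α ε₁ ε₂ s y'| ≤ (α ⊔ (1 - α)) * |y - y'| := by
  wlog h : y ≤ y' generalizing y y'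
  · rw [abs_sub_comm, abs_sub_comm y]
    exact this y' y (le_of_not_ge h)
  have hup : max (y' - s - ε₁) 0 - max (y - s - ε₁) 0 ∈ Set.Icc 0 (y' - y) := by
    grind
  have hdown : max (s + ε₂ - y) 0 - max (s + ε₂ - y') 0 ∈ Set.Icc 0 (y' - y) := by
    grind
  have hα₁ : 0 ≤ 1 - α := sub_nonneg.2 hα.2
  have hleft := mul_le_mul_of_nonneg_right (le_max_left α (1 - α)) (sub_nonneg.2 h)
  have hright := mul_le_mul_of_nonneg_right (le_max_right α (1 - α)) (sub_nonneg.2 h)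
  rw [abs_sub_comm y, abs_of_nonneg (sub_nonneg.2 h), abs_le]
  simp only [epsLoss]
  constructor <;> linarith [mul_le_mul_of_nonneg_left hup.2 hα₁, mul_nonneg hα₁ hup.1,
    mul_le_mul_of_nonneg_left hdown.2 hα.1, mul_nonneg hα.1 hdown.1]

theorem epsLoss_zero_le {D s : ℝ} (hα : 0 ≤ α) (hε₁ : 0 ≤ ε₁) (hε₂ : 0 ≤ ε₂)
    (hs : s ∈ Set.Icc 0 D) : epsLoss α ε₁ ε₂ s 0 ≤ (α ⊔ (1 - α)) * (D + ε₂) := by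
  have hs₀ : 0 ≤ s + ε₂ := add_nonneg hs.1 hε₂
  calc epsLoss α ε₁ ε₂ s 0 = α * (s + ε₂) := by
        rw [epsLoss, max_eq_right (by linarith [hs.1]), sub_zero, max_eq_left hs₀, mul_zero,
          zero_add]
    _ ≤ (α ⊔ (1 - α)) * (D + ε₂) :=
        mul_le_mul (le_max_left _ _) (add_le_add_left hs.2 ε₂) hs₀ (hα.trans (le_max_left _ _))

theorem continuous_uncurry_epsLoss : Continuous (Function.uncurry (epsLoss α ε₁ ε₂)) := by
  unfold Function.uncurry epsLoss
  fun_prop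

end EpsLoss

theorem LR_eNVC_R_generalization_bound_general {E : Type*} [NormedAddCommGroup E]
    [InnerProductSpace ℝ E] [MeasurableSpace E] [BorelSpace E] [SecondCountableTopology E]
    {α ε₁ ε₂ D κ lam : ℝ} (hα : α ∈ Set.Icc 0 1) (hε₁ : 0 ≤ ε₁) (hε₂ : 0 ≤ ε₂) (hD : 0 < D)
    (hlam : 0 < lam) {μ : Measure (E × ℝ)} [IsProbabilityMeasure μ]
    (hμ : ∀ᵐ z ∂μ, ‖z.1‖ ≤ κ ∧ z.2 ∈ Set.Icc 0 D) {n : ℕ} (hn : 0 < n) {δ : ℝ}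
    (hδ : δ ∈ Set.Ioo 0 1) :
    ENNReal.ofReal (1 - δ) ≤ (Measure.pi fun _ : Fin n => μ)
      {S | ∀ θ, (∀ θ', linearEmpRisk (epsLoss α ε₁ ε₂) S θ + lam * ‖θ‖ ^ 2 ≤
            linearEmpRisk (epsLoss α ε₁ ε₂) S θ' + lam * ‖θ'‖ ^ 2) →
        ∫ z, epsLoss α ε₁ ε₂ z.2 ⟪z.1, θ⟫ ∂μ - linearEmpRisk (epsLoss α ε₁ ε₂) S θ ≤
          (2 * (((α ⊔ (1 - α)) * κ) ^ 2 / lam) + (α ⊔ (1 - α)) * (D + ε₂)) *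
            √(Real.log (2 / δ) / (2 * n))} := by
  have hM : 0 < α ⊔ (1 - α) := by grind
  exact ofReal_le_measure_forall_isMin_risk_sub_le continuous_uncurry_epsLoss.measurable hM.le
    (abs_epsLoss_sub_le hα) (epsLoss_nonneg hα) (by positivity)
    (hμ.mono fun z hz => ⟨hz.1, epsLoss_zero_le hα.1 hε₁ hε₂ hz.2⟩) hlam hn hδ

/-- Generalization bound for LR-εNVC-R: with probability at least `1 − δ` over an
i.i.d. sample `S ~ μ^{⊗n}`, the regularized empirical risk minimizer `A(S)` satisfies
`R(A(S)) − R̂(A(S); S) ≤ (α∨(1−α))²·X_max²·p/(n·lam)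
  + 2·(α∨(1−α))²·X_max²·(p/lam)·√(ln(2/δ)/(2n)) + (D̄+ε₂)·(α∨(1−α))·√(ln(2/δ)/(2n))`. -/
theorem LR_eNVC_R_generalization_bound
    (α ε₁ ε₂ D Xmax lam : ℝ) (hα₀ : 0 < α) (hα₁ : α < 1) (hε : ε₁ > ε₂) (hε₂ : 0 ≤ ε₂)
    (hD : 0 < D) (hXmax : 0 < Xmax) (hlam : 0 < lam)
    (p : ℕ) (hp : 1 ≤ p) (X : Set (EuclideanSpace ℝ (Fin p)))
    (hX : ∀ x ∈ X, x ⟨0, by omega⟩ = 1 ∧ ‖x‖ ≤ Xmax * Real.sqrt p)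
    (n : ℕ) (hn : 0 < n)
    (μ : Measure (EuclideanSpace ℝ (Fin p) × ℝ)) [IsProbabilityMeasure μ]
    (hsupp : μ ((X ×ˢ Set.Icc (0 : ℝ) D)ᶜ) = 0)
    (δ : ℝ) (hδ : δ ∈ Set.Ioo (0 : ℝ) 1)
    (A : (Fin n → EuclideanSpace ℝ (Fin p) × ℝ) → EuclideanSpace ℝ (Fin p))
    (hA : Measurable A)
    (hAmin : ∀ᵐ S ∂(Measure.pi fun _ : Fin n => μ),
      ∀ θ : EuclideanSpace ℝ (Fin p),
        empRisk α ε₁ ε₂ S (A S) + lam * ‖A S‖ ^ 2 ≤ empRisk α ε₁ ε₂ S θ + lam * ‖θ‖ ^ 2) :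
    ENNReal.ofReal (1 - δ) ≤
      (Measure.pi fun _ : Fin n => μ)
        {S | trueRisk α ε₁ ε₂ μ (A S) - empRisk α ε₁ ε₂ S (A S) ≤
            (α ⊔ (1 - α)) ^ 2 * Xmax ^ 2 * p / (n * lam) +
              2 * (α ⊔ (1 - α)) ^ 2 * Xmax ^ 2 * (p / lam) *
                Real.sqrt (Real.log (2 / δ) / (2 * n)) +
              (D + ε₂) * (α ⊔ (1 - α)) * Real.sqrt (Real.log (2 / δ) / (2 * n))} := by
  have hbounded : ∀ᵐ z ∂μ, ‖z.1‖ ≤ Xmax * √p ∧ z.2 ∈ Set.Icc 0 D := by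
    filter_upwards [mem_ae_iff.2 hsupp] with z hz
    exact ⟨(hX z.1 hz.1).2, hz.2⟩
  refine (LR_eNVC_R_generalization_bound_general ⟨hα₀.le, hα₁.le⟩ (hε₂.trans hε.le) hε₂ hD hlam
    hbounded hn hδ).trans (measure_mono_ae ?_)
  filter_upwards [hAmin] with S hmin hbound
  have hextra : 0 ≤ (α ⊔ (1 - α)) ^ 2 * Xmax ^ 2 * p / (n * lam) := by positivity
  calc trueRisk α ε₁ ε₂ μ (A S) - empRisk α ε₁ ε₂ S (A S)
      ≤ (2 * (((α ⊔ (1 - α)) * (Xmax * √p)) ^ 2 / lam) + (α ⊔ (1 - α)) * (D + ε₂)) *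
          √(Real.log (2 / δ) / (2 * n)) := hbound (A S) hmin
    _ = 2 * (α ⊔ (1 - α)) ^ 2 * Xmax ^ 2 * (p / lam) * √(Real.log (2 / δ) / (2 * n)) +
          (D + ε₂) * (α ⊔ (1 - α)) * √(Real.log (2 / δ) / (2 * n)) := by
        rw [mul_pow, mul_pow, Real.sq_sqrt (Nat.cast_nonneg p)]
        ring
    _ ≤ _ := by linarith
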